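/- Let κ ∈ ℤ_{>0} ∪ {∞}, R ∈ ℤ_{≥0}^m, C ∈ ℤ_{≥0}^n with |R| = |C| = N, and assume T_κ(R,C) > 0. Then lim_{s→∞} (1/s²) ln T_κ(R^{(s)},C^{(s)}) = max_{Z ∈ Π_κ(R,C)} Σ_{i=1}^m Σ_{j=1}^n H^max_κ(z_{ij}). -/

import Mathlib

open Real Filter Finset

noncomputable section

/-- `ω(n) = n^n / n!`. -/
def omegaFn (n : ℕ) : ℝ := (n : ℝ) ^ n / (n.factorial : ℝ)

/-- `Ω(V)`: the sum of `ω(v)` over the entries of a vector `V`. -/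
def OmegaVec {I : Type*} [Fintype I] (V : I → ℕ) : ℝ := ∑ i, omegaFn (V i)

/-- `Ω(K)`: the sum of `ω(k)` over the entries of a matrix `K`. -/
def OmegaMat {I J : Type*} [Fintype I] [Fintype J] (K : I → J → ℕ) : ℝ :=
  ∑ i, ∑ j, omegaFn (K i j)

/-- `T_K(R,C)`: the number of nonnegative-integer matrices with row sums `R`,
column sums `C`, and entries bounded by `K` (a bound of `⊤` means unbounded). -/
def tableCount {I J : Type*} [Fintype I] [Fintype J]
    (K : I → J → ℕ∞) (R : I → ℕ) (C : J → ℕ) : ℕ :=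
  Set.ncard {A : I → J → ℕ |
    (∀ i, ∑ j, A i j = R i) ∧ (∀ j, ∑ i, A i j = C j) ∧ ∀ i j, (A i j : ℕ∞) ≤ K i j}

/-- The `s`-fold cloning of a margin vector. -/
def cloneVec {m : ℕ} (s : ℕ) (R : Fin m → ℕ) : Fin s × Fin m → ℕ :=
  fun p => s * R p.2

/-- The `s`-fold cloning of a bound matrix. -/
def cloneMat {m n : ℕ} (s : ℕ) (K : Fin m → Fin n → ℕ∞) :
    Fin s × Fin m → Fin s × Fin n → ℕ∞ :=
  fun p q => K p.2 q.2

/-- The mean of the truncated geometric distribution on `{0,…,κ}` with ratio `q`. -/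
def tgMean (κ : ℕ∞) (q : ℝ) : ℝ :=
  if κ = ⊤ then q / (1 - q)
  else (∑ t ∈ Finset.range (κ.toNat + 1), (t : ℝ) * q ^ t) /
    (∑ t ∈ Finset.range (κ.toNat + 1), q ^ t)

/-- The parameter `q(x;κ)` of the truncated geometric distribution `TG(x;κ)` with mean `x`. -/
def tgQ (κ : ℕ∞) (x : ℝ) : ℝ := sInf {q : ℝ | 0 ≤ q ∧ x ≤ tgMean κ q}

/-- The parameter `p(x;κ)` of the truncated geometric distribution `TG(x;κ)` with mean `x`. -/
def tgP (κ : ℕ∞) (x : ℝ) : ℝ :=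
  if κ = ⊤ then 1 - tgQ κ x
  else (∑ t ∈ Finset.range (κ.toNat + 1), tgQ κ x ^ t)⁻¹

/-- The probability mass function of `TG(x;κ)`: `Pr[X=t] = p q^t` for `t ∈ {0,…,κ}`. -/
def tgPMF (κ : ℕ∞) (x : ℝ) (t : ℕ) : ℝ :=
  if (t : ℕ∞) ≤ κ then tgP κ x * tgQ κ x ^ t else 0

/-- `H^max_κ(x)`: the (base-e) entropy of the truncated geometric distribution `TG(x;κ)`. -/
def Hmax (κ : ℕ∞) (x : ℝ) : ℝ := -∑' t : ℕ, tgPMF κ x t * Real.log (tgPMF κ x t)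

/-- The `(κ+1)`-nomial coefficient `(n choose r)_κ`: the coefficient of `x^r` in
`(1+x+⋯+x^κ)^n`; for `κ = ∞` it is `(r+n-1).choose r`. -/
def knomial (κ : ℕ∞) (n r : ℕ) : ℕ :=
  if κ = ⊤ then (r + n - 1).choose r
  else ((∑ t ∈ Finset.range (κ.toNat + 1), (Polynomial.X : Polynomial ℕ) ^ t) ^ n).coeff r

/-- The independence-heuristic estimate `I_κ(R,C)`. -/
def indepEst (κ : ℕ∞) {I J : Type*} [Fintype I] [Fintype J] (R : I → ℕ) (C : J → ℕ) : ℝ :=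
  ((knomial κ (Fintype.card I * Fintype.card J) (∑ i, R i) : ℝ))⁻¹ *
    (∏ i, (knomial κ (Fintype.card J) (R i) : ℝ)) *
    ∏ j, (knomial κ (Fintype.card I) (C j) : ℝ)

/-- The transportation polytope `Π_κ(R,C)` of real matrices with entries in `[0,κ]`,
row sums `R` and column sums `C`. -/
def transportPolytope (κ : ℕ∞) {m n : ℕ} (R : Fin m → ℕ) (C : Fin n → ℕ) :
    Set (Fin m → Fin n → ℝ) :=
  {Z | (∀ i j, 0 ≤ Z i j) ∧ (∀ i j, κ ≠ ⊤ → Z i j ≤ (κ.toNat : ℝ)) ∧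
    (∀ i, ∑ j, Z i j = (R i : ℝ)) ∧ ∀ j, ∑ i, Z i j = (C j : ℝ)}

/-- The generating function `G(x,y) = ∏_{i,j} (1 + x_i y_j + ⋯ + (x_i y_j)^{k_{ij}})`. -/
def genFun {m n : ℕ} (K : Fin m → Fin n → ℕ) (x : Fin m → ℝ) (y : Fin n → ℝ) : ℝ :=
  ∏ i, ∏ j, ∑ t ∈ Finset.range (K i j + 1), (x i * y j) ^ t

/-- The monomial `x^R = ∏_i x_i^{r_i}`. -/
def monom {m : ℕ} (x : Fin m → ℝ) (R : Fin m → ℕ) : ℝ := ∏ i, x i ^ R i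

/-- The concave roof function `f_K(R,C)`: the supremum of `∑_t α_t ln T_K(R^t,C^t)` over
convex combinations of integer margins averaging to `(R,C)` (and `⊥ = -∞` if none exist). -/
def fK {m n : ℕ} (K : Fin m → Fin n → ℕ) (R : Fin m → ℝ) (C : Fin n → ℝ) : EReal :=
  sSup {v : EReal | ∃ (p : ℕ) (α : Fin p → ℝ)
    (Rs : Fin p → Fin m → ℕ) (Cs : Fin p → Fin n → ℕ),
    1 ≤ p ∧ (∀ t, 0 ≤ α t) ∧ ∑ t, α t = 1 ∧
    (∀ i, ∑ t, α t * (Rs t i : ℝ) = R i) ∧ (∀ j, ∑ t, α t * (Cs t j : ℝ) = C j) ∧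
    (∀ t, 0 < tableCount (fun i j => (K i j : ℕ∞)) (Rs t) (Cs t)) ∧
    v = ((∑ t, α t * Real.log (tableCount (fun i j => (K i j : ℕ∞)) (Rs t) (Cs t)) : ℝ) : EReal)}

/-- `e^x` for an extended real `x`, with `e^{-∞} = 0`. -/
def expE (e : EReal) : ℝ := if e = ⊥ then 0 else Real.exp e.toReal

end
/-! ### The truncated geometric distribution -/

lemma tgQ_nonneg (κ : ℕ∞) (x : ℝ) : 0 ≤ tgQ κ x :=
  Real.sInf_nonneg fun _ h => h.1

lemma tgQ_top {x : ℝ} (hx : 0 ≤ x) : tgQ ⊤ x = x / (1 + x) := by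
  refine IsLeast.csInf_eq ⟨⟨by positivity, ?_⟩, ?_⟩
  · have : (1 + x) ≠ 0 := by positivity
    simp only [tgMean, if_true]
    apply le_of_eq
    have h : 1 - x / (1 + x) = 1 / (1 + x) := by field_simp; ring
    rw [h]; field_simp
  · rintro q ⟨hq0, hq⟩
    simp only [tgMean, if_true] at hq
    have h1 : x / (1 + x) < 1 := by rw [div_lt_one (by positivity)]; linarith
    by_cases h : q < 1
    · rw [le_div_iff₀ (by linarith)] at hq
      rw [div_le_iff₀ (by positivity)]
      nlinarith
    · linarith

lemma tgP_top {x : ℝ} (hx : 0 ≤ x) : tgP ⊤ x = 1 / (1 + x) := by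
  have : (1 + x) ≠ 0 := by positivity
  simp only [tgP, if_true, tgQ_top hx]
  field_simp; ring

lemma geom_partition_pos (k : ℕ) {q : ℝ} (hq : 0 ≤ q) :
    0 < ∑ t ∈ Finset.range (k + 1), q ^ t := by
  rw [Finset.sum_range_succ']
  have : 0 ≤ ∑ t ∈ Finset.range k, q ^ (t + 1) := Finset.sum_nonneg fun _ _ => by positivity
  simp only [pow_zero]; linarith

lemma exists_le_tgMean (k : ℕ) {x : ℝ} (hxk : x < k) : ∃ q, 0 ≤ q ∧ x ≤ tgMean k q := by
  refine ⟨max 1 ((k : ℝ) * (k + 1) / (k - x)), by positivity, ?_⟩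
  set q := max 1 ((k : ℝ) * (k + 1) / (k - x)) with hq
  have hq1 : 1 ≤ q := le_max_left _ _
  have hq2 : (k : ℝ) * (k + 1) / (k - x) ≤ q := le_max_right _ _
  have hd : 0 < (k : ℝ) - x := by linarith
  rw [div_le_iff₀ hd] at hq2
  have hP := geom_partition_pos k (by linarith : 0 ≤ q)
  simp only [tgMean, ENat.natCast_ne_top, if_false, ENat.toNat_natCast]
  rw [le_div_iff₀ hP]
  have h1 : ∀ t ∈ Finset.range (k + 1), ((k : ℝ) - t) * q ^ (t + 1) ≤ k * q ^ k := by
    intro t ht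
    have ht : t ≤ k := by simpa [Nat.lt_succ_iff] using ht
    rcases ht.eq_or_lt with rfl | ht'
    · simp; positivity
    · have : (t : ℝ) ≤ k := by exact_mod_cast ht
      have h0 : (0 : ℝ) ≤ t := by positivity
      have := pow_le_pow_right₀ hq1 (Nat.succ_le_of_lt ht')
      apply mul_le_mul (by linarith) this (by positivity) (by positivity)
  have h2 := Finset.sum_le_sum h1
  simp only [Finset.sum_const, Finset.card_range, nsmul_eq_mul, Nat.cast_add, Nat.cast_one] at h2
  have h3 : q ^ k ≤ ∑ t ∈ Finset.range (k + 1), q ^ t :=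
    Finset.single_le_sum (f := fun t => q ^ t) (fun _ _ => by positivity) (by simp)
  have h4 : ∑ t ∈ Finset.range (k + 1), ((k : ℝ) - t) * q ^ (t + 1) =
      q * (k * ∑ t ∈ Finset.range (k + 1), q ^ t - ∑ t ∈ Finset.range (k + 1), (t : ℝ) * q ^ t) := by
    rw [Finset.mul_sum, ← Finset.sum_sub_distrib, Finset.mul_sum]
    exact Finset.sum_congr rfl fun t _ => by ring
  rw [h4] at h2
  have h5 : 0 < q := by linarith
  have h6 : ((k : ℝ) + 1) * (k * q ^ k) ≤ q * ((k - x) * ∑ t ∈ Finset.range (k + 1), q ^ t) := by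
    calc ((k : ℝ) + 1) * (k * q ^ k) = (k * (k + 1)) * q ^ k := by ring
      _ ≤ (q * (k - x)) * ∑ t ∈ Finset.range (k + 1), q ^ t := by gcongr
      _ = _ := by ring
  have h7 := le_of_mul_le_mul_left (h2.trans h6) h5
  linarith

lemma tgMean_tgQ (k : ℕ) {x : ℝ} (hx : 0 ≤ x) (hxk : x < k) : tgMean k (tgQ k x) = x := by
  have hcont : ContinuousOn (tgMean k) (Set.Ici 0) := by
    have : tgMean k = fun q => (∑ t ∈ Finset.range (k + 1), (t : ℝ) * q ^ t) /
        (∑ t ∈ Finset.range (k + 1), q ^ t) := by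
      funext q; simp [tgMean]
    rw [this]
    exact ContinuousOn.div (by fun_prop) (by fun_prop) fun q hq => (geom_partition_pos k hq).ne'
  have hclosed : IsClosed {q : ℝ | 0 ≤ q ∧ x ≤ tgMean k q} :=
    hcont.preimage_isClosed_of_isClosed isClosed_Ici isClosed_Ici
  have hbdd : BddBelow {q : ℝ | 0 ≤ q ∧ x ≤ tgMean k q} := ⟨0, fun _ h => h.1⟩
  have hmem : tgQ k x ∈ {q : ℝ | 0 ≤ q ∧ x ≤ tgMean k q} :=
    hclosed.csInf_mem (exists_le_tgMean k hxk) hbdd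
  have h0 : tgMean k 0 = 0 := by
    simp only [tgMean, ENat.natCast_ne_top, if_false, ENat.toNat_natCast]
    rw [Finset.sum_eq_zero, zero_div]
    intro t _
    rcases t with _ | t <;> simp
  obtain ⟨q, ⟨hq0, hq1⟩, hq⟩ := intermediate_value_Icc hmem.1
    (hcont.mono (fun q hq => hq.1)) (show x ∈ Set.Icc (tgMean k 0) (tgMean k (tgQ k x)) from
      ⟨by rw [h0]; exact hx, hmem.2⟩)
  have : tgQ k x ≤ q := csInf_le hbdd ⟨hq0, hq.ge⟩
  rwa [← le_antisymm hq1 this]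

lemma tgQ_pos (k : ℕ) {x : ℝ} (hx : 0 < x) (hxk : x < k) : 0 < tgQ k x := by
  refine (tgQ_nonneg _ _).lt_of_ne fun h => ?_
  have h1 := tgMean_tgQ k hx.le hxk
  rw [← h] at h1
  simp only [tgMean, ENat.natCast_ne_top, if_false, ENat.toNat_natCast] at h1
  rw [Finset.sum_eq_zero, zero_div] at h1
  · exact hx.ne h1
  · intro t _
    rcases t with _ | t <;> simp

lemma tgP_coe (k : ℕ) (x : ℝ) : tgP k x = (∑ t ∈ Finset.range (k + 1), tgQ k x ^ t)⁻¹ := by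
  simp [tgP]

lemma tgPMF_coe_eq_zero {k t : ℕ} (x : ℝ) (ht : t ∉ Finset.range (k + 1)) :
    tgPMF k x t = 0 := by
  have : ¬ t ≤ k := by simpa [Nat.lt_succ_iff] using ht
  simp [tgPMF, this]

lemma tgPMF_coe_of_le {k t : ℕ} (x : ℝ) (ht : t ≤ k) :
    tgPMF k x t = tgP k x * tgQ k x ^ t := by
  simp [tgPMF, ht]

lemma tgPMF_top {x : ℝ} (t : ℕ) : tgPMF ⊤ x t = tgP ⊤ x * tgQ ⊤ x ^ t := by
  simp [tgPMF]

lemma tgPMF_hasSum (κ : ℕ∞) {x : ℝ} (hx : 0 ≤ x) : HasSum (tgPMF κ x) 1 := by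
  induction κ using ENat.recTopCoe with
  | top =>
    have h1 : x / (1 + x) < 1 := by rw [div_lt_one (by positivity)]; linarith
    have := (hasSum_geometric_of_lt_one (by positivity) h1).mul_left (1 / (1 + x))
    have h2 : tgPMF ⊤ x = fun t => 1 / (1 + x) * (x / (1 + x)) ^ t := by
      funext t; rw [tgPMF_top, tgP_top hx, tgQ_top hx]
    have h3 : 1 / (1 + x) * (1 - x / (1 + x))⁻¹ = 1 := by
      have h4 : 1 - x / (1 + x) = 1 / (1 + x) := by field_simp; ring
      rw [h4]; field_simp
    rw [h3] at this
    rwa [h2]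
  | coe k =>
    have h : HasSum (tgPMF k x) (∑ t ∈ Finset.range (k + 1), tgPMF k x t) :=
      hasSum_sum_of_ne_finset_zero fun t ht => tgPMF_coe_eq_zero x ht
    convert h using 1
    rw [Finset.sum_congr rfl fun t ht => tgPMF_coe_of_le x
      (by simpa [Nat.lt_succ_iff] using ht), ← Finset.mul_sum, tgP_coe, inv_mul_cancel₀]
    exact (geom_partition_pos k (tgQ_nonneg _ _)).ne'

lemma tgP_pos (κ : ℕ∞) {x : ℝ} (hx : 0 ≤ x) : 0 < tgP κ x := by
  induction κ using ENat.recTopCoe with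
  | top => rw [tgP_top hx]; positivity
  | coe k => rw [tgP_coe]; exact inv_pos.2 (geom_partition_pos k (tgQ_nonneg _ _))

lemma tgPMF_nonneg (κ : ℕ∞) {x : ℝ} (hx : 0 ≤ x) (t : ℕ) : 0 ≤ tgPMF κ x t := by
  have := tgP_pos κ hx
  have := tgQ_nonneg κ x
  unfold tgPMF
  split_ifs <;> positivity

lemma tgPMF_le_one (κ : ℕ∞) {x : ℝ} (hx : 0 ≤ x) (t : ℕ) : tgPMF κ x t ≤ 1 :=
  le_hasSum (tgPMF_hasSum κ hx) t fun _ _ => tgPMF_nonneg κ hx _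

lemma Hmax_eq_tsum_negMulLog (κ : ℕ∞) (x : ℝ) : Hmax κ x = ∑' t, negMulLog (tgPMF κ x t) := by
  rw [Hmax, ← tsum_neg]
  exact tsum_congr fun t => by simp [negMulLog]

lemma Hmax_nonneg (κ : ℕ∞) {x : ℝ} (hx : 0 ≤ x) : 0 ≤ Hmax κ x := by
  rw [Hmax_eq_tsum_negMulLog]
  exact tsum_nonneg fun t => negMulLog_nonneg (tgPMF_nonneg κ hx t) (tgPMF_le_one κ hx t)

lemma Hmax_coe (k : ℕ) (x : ℝ) :
    Hmax k x = ∑ t ∈ Finset.range (k + 1), negMulLog (tgPMF k x t) := by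
  rw [Hmax_eq_tsum_negMulLog]
  exact tsum_eq_sum fun t ht => by rw [tgPMF_coe_eq_zero x ht, negMulLog_zero]

lemma tgPMF_coe_sum_mul (k : ℕ) {x : ℝ} (hx : 0 ≤ x) (hxk : x < k) :
    ∑ t ∈ Finset.range (k + 1), (t : ℝ) * tgPMF k x t = x := by
  conv_rhs => rw [← tgMean_tgQ k hx hxk]
  simp only [tgMean, ENat.natCast_ne_top, if_false, ENat.toNat_natCast]
  rw [div_eq_inv_mul, ← tgP_coe, Finset.mul_sum]
  refine Finset.sum_congr rfl fun t ht => ?_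
  rw [tgPMF_coe_of_le x (by simpa [Nat.lt_succ_iff] using ht)]
  ring

lemma log_tgPMF {p q : ℝ} (hp : 0 < p) (hq : 0 < q) (t : ℕ) :
    negMulLog (p * q ^ t) = (-Real.log p) * (p * q ^ t) + (-Real.log q) * (t * (p * q ^ t)) := by
  rw [negMulLog, Real.log_mul hp.ne' (by positivity), Real.log_pow]
  ring

lemma Hmax_top_hasSum {x : ℝ} (hx : 0 ≤ x) :
    HasSum (fun t => negMulLog (tgPMF ⊤ x t)) (negMulLog x - negMulLog (1 + x)) := by
  rcases hx.eq_or_lt with rfl | hx'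
  · have : (fun t => negMulLog (tgPMF ⊤ (0 : ℝ) t)) = fun _ => 0 := by
      funext t
      rw [tgPMF_top, tgP_top le_rfl, tgQ_top le_rfl]
      rcases t with _ | t <;> simp
    rw [this]; simp [hasSum_zero]
  · have h1 : x / (1 + x) < 1 := by rw [div_lt_one (by positivity)]; linarith
    have h0 : 0 < x / (1 + x) := by positivity
    have hp : 0 < 1 / (1 + x) := by positivity
    have hm := (hasSum_coe_mul_geometric_of_norm_lt_one
      (by rwa [Real.norm_of_nonneg h0.le] : ‖x / (1 + x)‖ < 1)).mul_left (1 / (1 + x))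
    have hs := tgPMF_hasSum ⊤ hx
    have h := (hs.mul_left (-Real.log (1 / (1 + x)))).add (hm.mul_left (-Real.log (x / (1 + x))))
    have h3 : 1 / (1 + x) * (x / (1 + x) / (1 - x / (1 + x)) ^ 2) = x := by
      have h4 : 1 - x / (1 + x) = 1 / (1 + x) := by field_simp; ring
      rw [h4]; field_simp
    have h5 : -Real.log (1 / (1 + x)) * 1 + -Real.log (x / (1 + x)) * x =
        negMulLog x - negMulLog (1 + x) := by
      rw [Real.log_div one_ne_zero (by positivity), Real.log_div hx'.ne' (by positivity),
        Real.log_one, negMulLog, negMulLog]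
      ring
    rw [h3, h5] at h
    refine h.congr_fun fun t => ?_
    rw [tgPMF_top, tgP_top hx, tgQ_top hx, log_tgPMF hp h0]
    ring

lemma Hmax_top {x : ℝ} (hx : 0 ≤ x) : Hmax ⊤ x = negMulLog x - negMulLog (1 + x) := by
  rw [Hmax_eq_tsum_negMulLog, (Hmax_top_hasSum hx).tsum_eq]

lemma Hmax_eq_of_pos (κ : ℕ∞) {x : ℝ} (hx : 0 < x) (hxk : κ ≠ ⊤ → x < κ.toNat) :
    0 < tgQ κ x ∧ Hmax κ x = -Real.log (tgP κ x) - x * Real.log (tgQ κ x) := by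
  induction κ using ENat.recTopCoe with
  | top =>
    have h0 : 0 < x / (1 + x) := by positivity
    rw [tgQ_top hx.le, tgP_top hx.le, Hmax_top hx.le]
    refine ⟨h0, ?_⟩
    rw [Real.log_div one_ne_zero (by positivity), Real.log_div hx.ne' (by positivity),
        Real.log_one, negMulLog, negMulLog]
    ring
  | coe k =>
    have hxk : x < k := by simpa using hxk
    have hq := tgQ_pos k hx hxk
    refine ⟨hq, ?_⟩
    have hs : ∑ t ∈ Finset.range (k + 1), tgPMF k x t = 1 := by
      rw [← (tgPMF_hasSum k hx.le).tsum_eq, tsum_eq_sum fun t ht => tgPMF_coe_eq_zero x ht]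
    have hm := tgPMF_coe_sum_mul k hx.le hxk
    have : ∀ t ∈ Finset.range (k + 1), negMulLog (tgPMF k x t) =
        (-Real.log (tgP k x)) * tgPMF k x t + (-Real.log (tgQ k x)) * (t * tgPMF k x t) := by
      intro t ht
      rw [tgPMF_coe_of_le x (by simpa [Nat.lt_succ_iff] using ht), log_tgPMF (tgP_pos _ hx.le) hq]
    rw [Hmax_coe, Finset.sum_congr rfl this, Finset.sum_add_distrib, ← Finset.mul_sum,
      ← Finset.mul_sum, hs, hm]
    ring

lemma exists_Hmax_le (κ : ℕ∞) (b : ℝ) :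
    ∃ B : ℝ, ∀ x, 0 ≤ x → x ≤ b → Hmax κ x ≤ B := by
  induction κ using ENat.recTopCoe with
  | top =>
    obtain ⟨B, hB⟩ := isCompact_Icc.bddAbove_image (K := Set.Icc 0 b)
      (f := fun x : ℝ => negMulLog x - negMulLog (1 + x)) (by fun_prop)
    refine ⟨B, fun x h0 hb => ?_⟩
    rw [Hmax_top h0]
    exact hB ⟨x, ⟨h0, hb⟩, rfl⟩
  | coe k =>
    refine ⟨k + 1, fun x h0 _ => ?_⟩
    rw [Hmax_coe]
    calc _ ≤ ∑ t ∈ Finset.range (k + 1), (1 : ℝ) := Finset.sum_le_sum fun t _ => by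
          have := tgPMF_nonneg k h0 t
          exact (negMulLog_le_one_sub_self this).trans (by linarith)
      _ = _ := by simp

lemma Hmax_self {k : ℕ} (hk : 1 ≤ k) : Hmax k k = 0 := by
  have hk' : (1 : ℝ) ≤ k := by exact_mod_cast hk
  have hq : tgQ k k = 0 := by
    have : {q : ℝ | 0 ≤ q ∧ (k : ℝ) ≤ tgMean k q} = ∅ := by
      ext q
      simp only [Set.mem_ofPred_eq, Set.mem_empty_iff_false, iff_false, not_and, not_le]
      intro hq
      simp only [tgMean, ENat.natCast_ne_top, if_false, ENat.toNat_natCast]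
      rw [div_lt_iff₀ (geom_partition_pos k hq), Finset.mul_sum]
      refine Finset.sum_lt_sum (fun t ht => ?_) ⟨0, by simp, by simp; omega⟩
      have ht : t ≤ k := by simpa [Nat.lt_succ_iff] using ht
      gcongr
    rw [tgQ, this, Real.sInf_empty]
  rw [Hmax_coe]
  refine Finset.sum_eq_zero fun t ht => ?_
  rw [tgPMF_coe_of_le _ (by simpa [Nat.lt_succ_iff] using ht), tgP_coe, hq]
  rcases t with _ | t <;> simp [Finset.sum_range_succ']

/-- `w` is a probability vector on `{0, …, K}` with mean `x`. -/
structure IsDistOfMean (K : ℕ) (x : ℝ) (w : ℕ → ℝ) : Prop where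
  nonneg : ∀ t, 0 ≤ w t
  sum_eq : ∑ t ∈ Finset.range (K + 1), w t = 1
  mean_eq : ∑ t ∈ Finset.range (K + 1), (t : ℝ) * w t = x

lemma exists_isDistOfMean_coe {k : ℕ} (hk : 1 ≤ k) {x : ℝ} (hx : 0 ≤ x) (hxk : x ≤ k) :
    ∃ w, IsDistOfMean k x w ∧ Hmax k x ≤ ∑ t ∈ Finset.range (k + 1), negMulLog (w t) := by
  rcases hxk.lt_or_eq with h | rfl
  · refine ⟨tgPMF k x, ⟨tgPMF_nonneg k hx, ?_, tgPMF_coe_sum_mul k hx h⟩, (Hmax_coe k x).le⟩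
    rw [← (tgPMF_hasSum k hx).tsum_eq, tsum_eq_sum fun t ht => tgPMF_coe_eq_zero x ht]
  · refine ⟨fun t => if t = k then 1 else 0, ⟨fun t => by positivity, by simp, by simp⟩, ?_⟩
    rw [Hmax_self hk]
    exact Finset.sum_nonneg fun t _ => by
      dsimp only
      split_ifs <;> simp

lemma eventually_exists_isDistOfMean_top {x : ℝ} (hx : 0 ≤ x) {ε : ℝ} (hε : 0 < ε) :
    ∀ᶠ K : ℕ in atTop, ∃ w, IsDistOfMean K x w ∧
      Hmax ⊤ x - ε ≤ ∑ t ∈ Finset.range (K + 1), negMulLog (w t) := by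
  set q := x / (1 + x) with hq
  set p := 1 / (1 + x) with hp
  have hp0 : 0 < p := by positivity
  have hq0 : 0 ≤ q := by positivity
  have hq1 : q < 1 := by rw [hq, div_lt_one (by positivity)]; linarith
  have hpq : p = 1 - q := by rw [hp, hq]; field_simp; ring
  have hxp : x * p = q := by rw [hp, hq]; ring
  have hqK : Tendsto (fun K : ℕ => q ^ K) atTop (nhds 0) :=
    tendsto_pow_atTop_nhds_zero_of_lt_one hq0 hq1
  have hxK : Tendsto (fun K : ℕ => x / (K : ℝ)) atTop (nhds 0) :=
    tendsto_const_div_atTop_nhds_zero_nat x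
  have hw0 : Tendsto (fun K : ℕ => p - x / K * q ^ K) atTop (nhds p) := by
    simpa using (hxK.mul hqK).const_sub p
  have hwK : Tendsto (fun K : ℕ => q ^ K * (1 + x / K)) atTop (nhds 0) := by
    simpa using hqK.mul (hxK.const_add 1)
  have hH := (Hmax_top_hasSum hx).tendsto_sum_nat
  rw [← Hmax_top hx] at hH
  have hlim : Tendsto (fun K : ℕ => ∑ t ∈ Finset.range K, negMulLog (tgPMF ⊤ x t) +
      (negMulLog (p - x / K * q ^ K) - negMulLog p) + negMulLog (q ^ K * (1 + x / K)))
      atTop (nhds (Hmax ⊤ x)) := by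
    have h1 := (continuous_negMulLog.tendsto p).comp hw0
    have h2 := (continuous_negMulLog.tendsto 0).comp hwK
    have := (hH.add (h1.sub_const (negMulLog p))).add h2
    simpa using this
  filter_upwards [hlim.eventually (lt_mem_nhds (by linarith : Hmax ⊤ x - ε < Hmax ⊤ x)),
    hw0.eventually (lt_mem_nhds hp0), eventually_ge_atTop 1] with K hK hKp hK1
  obtain ⟨L, rfl⟩ : ∃ L, K = L + 1 := ⟨K - 1, by omega⟩
  have hmass : ∀ L : ℕ, ∑ t ∈ Finset.range L, p * q ^ (t + 1) = q - q ^ (L + 1) := by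
    intro L
    induction L with
    | zero => simp
    | succ L ih => rw [Finset.sum_range_succ, ih, hpq]; ring
  have hmean : ∀ L : ℕ, ∑ t ∈ Finset.range L, ((t + 1 : ℕ) : ℝ) * (p * q ^ (t + 1)) =
      x - (L + 1) * q ^ (L + 1) - x * q ^ (L + 1) := by
    intro L
    induction L with
    | zero =>
      simp only [Finset.range_zero, Finset.sum_empty, Nat.cast_zero, zero_add, pow_one, one_mul]
      rw [hq]; field_simp; ring
    | succ L ih =>
      rw [Finset.sum_range_succ, ih]
      push_cast
      have : q ^ (L + 1 + 1) = q ^ (L + 1) * q := pow_succ _ _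
      rw [this]
      have h5 : x * q = x - q := by linear_combination x * hpq - hxp
      linear_combination q ^ (L + 1) * (((L : ℝ) + 1) * hpq + h5)
  refine ⟨fun t => if t = 0 then p - x / (L + 1 : ℕ) * q ^ (L + 1) else
    if t < L + 1 then p * q ^ t else q ^ (L + 1) * (1 + x / (L + 1 : ℕ)), ⟨?_, ?_, ?_⟩, ?_⟩
  · intro t
    split_ifs
    · exact hKp.le
    · positivity
    · positivity
  · rw [Finset.sum_range_succ, Finset.sum_range_succ',
      Finset.sum_congr rfl (g := fun t => p * q ^ (t + 1)) fun t ht => by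
        have := Finset.mem_range.1 ht
        simp [this], hmass]
    simp
    rw [hpq]; ring
  · rw [Finset.sum_range_succ, Finset.sum_range_succ',
      Finset.sum_congr rfl (g := fun t => ((t + 1 : ℕ) : ℝ) * (p * q ^ (t + 1))) fun t ht => by
        have := Finset.mem_range.1 ht
        simp [this], hmean]
    simp
    field_simp; ring
  · refine hK.le.trans (le_of_eq ?_)
    rw [Finset.sum_range_succ _ (L + 1), Finset.sum_range_succ', Finset.sum_range_succ',
      Finset.sum_congr rfl (g := fun t => negMulLog (p * q ^ (t + 1))) fun t ht => by
        rw [tgPMF_top, tgP_top hx, tgQ_top hx],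
      Finset.sum_congr rfl (g := fun t => negMulLog (p * q ^ (t + 1)))
        (s₁ := Finset.range L) (f := fun t => negMulLog (if t + 1 = 0 then _ else _)) fun t ht => by
        have := Finset.mem_range.1 ht
        simp [this], tgPMF_top, tgP_top hx, tgQ_top hx]
    simp [← hp]

lemma exists_isDistOfMean {ι : Type*} [Finite ι] {κ : ℕ∞} (hκ : 1 ≤ κ) (z : ι → ℝ)
    (hz : ∀ e, 0 ≤ z e) (hzκ : ∀ e, κ ≠ ⊤ → z e ≤ κ.toNat) {ε : ℝ} (hε : 0 < ε) :
    ∃ (K : ℕ) (w : ι → ℕ → ℝ), (K : ℕ∞) ≤ κ ∧ ∀ e, IsDistOfMean K (z e) (w e) ∧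
      Hmax κ (z e) - ε ≤ ∑ t ∈ Finset.range (K + 1), negMulLog (w e t) := by
  induction κ using ENat.recTopCoe with
  | top =>
    obtain ⟨K, hK⟩ := (eventually_all.2 fun e =>
      eventually_exists_isDistOfMean_top (hz e) hε).exists
    choose w hw using hK
    exact ⟨K, w, le_top, hw⟩
  | coe k =>
    choose w hw hw' using fun e => exists_isDistOfMean_coe (by exact_mod_cast hκ : 1 ≤ k) (hz e)
      (by simpa using hzκ e)
    exact ⟨k, w, le_rfl, fun e => ⟨hw e, by linarith [hw' e]⟩⟩

/-! ### Rational approximation preserving linear relations -/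

lemma exists_rat_linearMap_approx {ι : Type*} [Finite ι] (w : ι → ℝ) {ε : ℝ} (hε : 0 < ε) :
    ∃ φ : ℝ →ₗ[ℚ] ℚ, φ 1 = 1 ∧ ∀ e, |((φ (w e) : ℚ) : ℝ) - w e| < ε := by
  let b := Module.Basis.ofVectorSpace ℚ ℝ
  let F : ℝ → (Module.Basis.ofVectorSpaceIndex ℚ ℝ → ℝ) → ℝ := fun x y =>
    ∑ k ∈ (b.repr x).support, ((b.repr x k : ℚ) : ℝ) * y k
  have hF : ∀ x, Continuous (F x) := fun x => by fun_prop
  have hFb : ∀ x, F x b = x := fun x => by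
    conv_rhs => rw [← b.linearCombination_repr x, Finsupp.linearCombination_apply, Finsupp.sum]
    exact Finset.sum_congr rfl fun k _ => (Rat.smul_def _ _).symm
  have hev : ∀ᶠ y in nhds (b : _ → ℝ), F 1 y ≠ 0 ∧ ∀ e, |F (w e) y / F 1 y - w e| < ε := by
    refine ((hF 1).continuousAt.eventually_ne (by rw [hFb]; exact one_ne_zero)).and
      (eventually_all.2 fun e => ?_)
    have hc : ContinuousAt (fun y => |F (w e) y / F 1 y - w e|) b :=
      (((hF _).continuousAt.div (hF _).continuousAt (by rw [hFb]; exact one_ne_zero)).sub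
        continuousAt_const).abs
    refine hc.eventually (gt_mem_nhds ?_)
    simpa [hFb] using hε
  have hd : DenseRange (fun (y : Module.Basis.ofVectorSpaceIndex ℚ ℝ → ℚ) k => ((y k : ℚ) : ℝ)) :=
    DenseRange.piMap fun _ => Rat.denseRange_cast
  obtain ⟨y, hy1, hy⟩ := hd.exists_mem_open isOpen_interior ⟨_, mem_interior_iff_mem_nhds.2 hev⟩
    |>.imp fun y hy => interior_subset hy
  let φ : ℝ →ₗ[ℚ] ℚ := b.constr ℚ y
  have hφ : ∀ x, ((φ x : ℚ) : ℝ) = F x fun k => (y k : ℝ) := fun x => by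
    simp [φ, F, Module.Basis.constr_apply, Finsupp.sum]
  have h1 : φ 1 ≠ 0 := fun h => hy1 (by rw [← hφ, h, Rat.cast_zero])
  refine ⟨(φ 1)⁻¹ • φ, by simp [h1], fun e => ?_⟩
  convert hy e using 3
  simp [← hφ]
  ring

/-! ### Combinatorics of tables -/

lemma finite_tables {I J : Type*} [Fintype I] [Fintype J] (K : I → J → ℕ∞) (R : I → ℕ)
    (C : J → ℕ) : {A : I → J → ℕ |
      (∀ i, ∑ j, A i j = R i) ∧ (∀ j, ∑ i, A i j = C j) ∧ ∀ i j, (A i j : ℕ∞) ≤ K i j}.Finite := by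
  classical
  refine (Set.finite_Icc (0 : I → J → ℕ) fun i _ => R i).subset ?_
  rintro A ⟨hR, -, -⟩
  refine ⟨fun i j => Nat.zero_le _, fun i j => ?_⟩
  refine le_of_le_of_eq ?_ (hR i)
  exact Finset.single_le_sum (f := A i) (fun _ _ => Nat.zero_le _) (Finset.mem_univ j)

lemma prod_tableCount_le {P Q I J : Type*} [Fintype P] [Fintype Q] [Fintype I] [Fintype J]
    (κ : ℕ∞) (ρ : P → Q → I → ℕ) (γ : P → Q → J → ℕ) :
    ∏ p, ∏ q, tableCount (fun (_ : I) (_ : J) => κ) (ρ p q) (γ p q) ≤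
      tableCount (fun (_ : P × I) (_ : Q × J) => κ) (fun x => ∑ q, ρ x.1 q x.2)
        (fun y => ∑ p, γ p y.1 y.2) := by
  simp only [tableCount, ← Nat.card_coe_set_eq]
  simp only [← Nat.card_pi]
  have : Finite {A : P × I → Q × J → ℕ | (∀ i, ∑ j, A i j = ∑ q, ρ i.1 q i.2) ∧
      (∀ j, ∑ i, A i j = ∑ p, γ p j.1 j.2) ∧ ∀ i j, (A i j : ℕ∞) ≤ κ} :=
    (finite_tables (fun (_ : P × I) (_ : Q × J) => κ) _ _).to_subtype
  refine Nat.card_le_card_of_injective (fun A => ⟨fun x y => (A x.1 y.1).1 x.2 y.2, ?_, ?_, ?_⟩) ?_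
  · intro x
    rw [Fintype.sum_prod_type]
    exact Finset.sum_congr rfl fun q _ => (A x.1 q).2.1 x.2
  · intro y
    rw [Fintype.sum_prod_type]
    exact Finset.sum_congr rfl fun p _ => (A p y.1).2.2.1 y.2
  · exact fun x y => (A x.1 y.1).2.2.2 x.2 y.2
  · intro A B h
    funext p q
    ext i j
    exact congrFun (congrFun (congrArg Subtype.val h) (p, i)) (q, j)

lemma tableCount_le_reindex {I J I' J' : Type*} [Fintype I] [Fintype J] [Fintype I'] [Fintype J']
    (κ : ℕ∞) (R : I → ℕ) (C : J → ℕ) (e : I' ≃ I) (f : J' ≃ J) :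
    tableCount (fun _ _ => κ) R C ≤ tableCount (fun _ _ => κ) (R ∘ e) (C ∘ f) := by
  refine Set.ncard_le_ncard_of_injOn (fun A i j => A (e i) (f j)) ?_ ?_ (finite_tables _ _ _)
  · rintro A ⟨hR, hC, hA⟩
    exact ⟨fun i => (f.sum_comp (A (e i))).trans (hR _),
      fun j => (e.sum_comp fun i => A i (f j)).trans (hC _), fun i j => hA _ _⟩
  · intro A _ B _ h
    funext i j
    simpa using congrFun (congrFun h (e.symm i)) (f.symm j)

lemma tableCount_reindex {I J I' J' : Type*} [Fintype I] [Fintype J] [Fintype I'] [Fintype J']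
    (κ : ℕ∞) (R : I → ℕ) (C : J → ℕ) (e : I' ≃ I) (f : J' ≃ J) :
    tableCount (fun _ _ => κ) (R ∘ e) (C ∘ f) = tableCount (fun _ _ => κ) R C := by
  refine le_antisymm ?_ (tableCount_le_reindex κ R C e f)
  simpa [Function.comp_assoc] using tableCount_le_reindex κ (R ∘ e) (C ∘ f) e.symm f.symm

lemma tableCount_block_le_clone {m n a t : ℕ} (κ : ℕ∞) (R : Fin m → ℕ) (C : Fin n → ℕ)
    (ρ : Fin a → Fin a → Fin t × Fin m → ℕ) (γ : Fin a → Fin a → Fin t × Fin n → ℕ)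
    (hρ : ∀ p x, ∑ q, ρ p q x = a * t * R x.2) (hγ : ∀ q y, ∑ p, γ p q y = a * t * C y.2) :
    ∏ p, ∏ q, tableCount (fun _ _ => κ) (ρ p q) (γ p q) ≤
      tableCount (fun _ _ => κ) (cloneVec (a * t) R) (cloneVec (a * t) C) := by
  refine (prod_tableCount_le κ ρ γ).trans (le_of_eq ?_)
  rw [← tableCount_reindex κ (cloneVec (a * t) R) (cloneVec (a * t) C)
    ((Equiv.prodAssoc (Fin a) (Fin t) (Fin m)).symm.trans (finProdFinEquiv.prodCongr (.refl _)))
    ((Equiv.prodAssoc (Fin a) (Fin t) (Fin n)).symm.trans (finProdFinEquiv.prodCongr (.refl _)))]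
  congr 1
  · funext x; exact hρ _ _
  · funext y; exact hγ _ _

lemma tableCount_clone_pow_le {m n : ℕ} (κ : ℕ∞) (R : Fin m → ℕ) (C : Fin n → ℕ) (q t : ℕ) :
    tableCount (fun _ _ => κ) (cloneVec t R) (cloneVec t C) ^ (q * q) ≤
      tableCount (fun _ _ => κ) (cloneVec (q * t) R) (cloneVec (q * t) C) := by
  have := tableCount_block_le_clone κ R C (fun (_ _ : Fin q) => cloneVec t R)
    (fun _ _ => cloneVec t C) (fun p x => by simp [cloneVec, mul_assoc])
    (fun p x => by simp [cloneVec, mul_assoc])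
  simpa [pow_mul] using this

lemma tableCount_shift_pow_le {m n a : ℕ} [NeZero a] (κ : ℕ∞) (R : Fin m → ℕ) (C : Fin n → ℕ)
    (ρ : Fin a × Fin m → ℕ) (γ : Fin a × Fin n → ℕ)
    (hρ : ∀ i, ∑ α, ρ (α, i) = a * a * R i) (hγ : ∀ j, ∑ α, γ (α, j) = a * a * C j) :
    tableCount (fun _ _ => κ) ρ γ ^ (a * a) ≤
      tableCount (fun _ _ => κ) (cloneVec (a * a) R) (cloneVec (a * a) C) := by
  have h := tableCount_block_le_clone κ R C
    (fun (p q : Fin a) => ρ ∘ ((Equiv.addRight (p + q)).prodCongr (.refl _)))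
    (fun (p q : Fin a) => γ ∘ ((Equiv.addRight (p + q)).prodCongr (.refl _)))
    (fun p x => ?_) (fun q y => ?_)
  · simp only [tableCount_reindex] at h
    simpa [pow_mul] using h
  · rw [← hρ x.2]
    refine Eq.trans ?_ (Equiv.sum_comp (Equiv.addLeft (x.1 + p)) fun α => ρ (α, x.2))
    exact Finset.sum_congr rfl fun q _ => by simp [Prod.map]
  · rw [← hγ y.2]
    refine Eq.trans ?_ (Equiv.sum_comp (Equiv.addLeft (y.1 + q)) fun α => γ (α, y.2))
    exact Finset.sum_congr rfl fun p _ => by simp [Prod.map, add_comm p q]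

lemma tableCount_clone_le_add {m n : ℕ} (κ : ℕ∞) (R : Fin m → ℕ) (C : Fin n → ℕ)
    (hT : 0 < tableCount (fun (_ : Fin m) (_ : Fin n) => κ) R C) (s r : ℕ) :
    tableCount (fun _ _ => κ) (cloneVec s R) (cloneVec s C) ≤
      tableCount (fun _ _ => κ) (cloneVec (s + r) R) (cloneVec (s + r) C) := by
  obtain ⟨B, hBR, hBC, hB⟩ := Set.nonempty_of_ncard_ne_zero hT.ne'
  refine Set.ncard_le_ncard_of_injOn (fun A x y =>
    Fin.addCases (motive := fun _ => ℕ) (fun a => Fin.addCases (motive := fun _ => ℕ)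
      (fun b => A (a, x.2) (b, y.2)) (fun _ => B x.2 y.2) y.1) (fun _ => B x.2 y.2) x.1)
    ?_ ?_ (finite_tables _ _ _)
  · rintro A ⟨hR, hC, hA⟩
    simp only [Fintype.sum_prod_type, cloneVec, Prod.forall] at hR hC hA
    refine ⟨?_, ?_, ?_⟩
    · rintro ⟨x, i⟩
      rw [Fintype.sum_prod_type, Fin.sum_univ_add]
      refine Fin.addCases (fun x => ?_) (fun x => ?_) x <;>
        simp [hR, hBR, cloneVec, add_mul]
    · rintro ⟨y, j⟩
      rw [Fintype.sum_prod_type, Fin.sum_univ_add]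
      refine Fin.addCases (fun y => ?_) (fun y => ?_) y <;>
        simp [hC, hBC, cloneVec, add_mul]
    · rintro ⟨x, i⟩ ⟨y, j⟩
      refine Fin.addCases (fun x => ?_) (fun x => ?_) x <;>
        refine Fin.addCases (fun y => ?_) (fun y => ?_) y <;> simp [hA, hB]
  · intro A _ A' _ h
    funext ⟨x, i⟩ ⟨y, j⟩
    simpa using congrFun (congrFun h (Fin.castAdd r x, i)) (Fin.castAdd r y, j)

/-- Pigeonhole over margins: a finite family of matrices with entries at most `K` contains a
matrix whose margins are shared by many others. -/
lemma exists_card_le_mul_tableCount {I J : Type*} [Fintype I] [Fintype J] {κ : ℕ∞} {K : ℕ}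
    (hK : (K : ℕ∞) ≤ κ) (W : Finset (I → J → ℕ)) (hW : W.Nonempty)
    (hWK : ∀ A ∈ W, ∀ i j, A i j ≤ K) :
    ∃ A ∈ W, W.card ≤ tableCount (fun _ _ => κ) (fun i => ∑ j, A i j) (fun j => ∑ i, A i j) *
      ((Fintype.card J * K + 1) ^ Fintype.card I * (Fintype.card I * K + 1) ^ Fintype.card J) := by
  classical
  let f : (I → J → ℕ) → (I → ℕ) × (J → ℕ) := fun A => (fun i => ∑ j, A i j, fun j => ∑ i, A i j)
  obtain ⟨A, hA, hmax⟩ := Finset.exists_max_image W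
    (fun A => tableCount (fun _ _ => κ) (f A).1 (f A).2) hW
  refine ⟨A, hA, (Finset.card_le_mul_card_image (f := f) W _ fun b hb => ?_).trans
    (Nat.mul_le_mul_left _ ?_)⟩
  · obtain ⟨B, hB, rfl⟩ := Finset.mem_image.1 hb
    refine le_trans ?_ (hmax B hB)
    rw [← Set.ncard_coe_finset]
    refine Set.ncard_le_ncard (fun A' hA' => ?_) (finite_tables _ _ _)
    obtain ⟨hA'W, hA'f⟩ := by simpa using hA'
    refine ⟨fun i => congrFun (congrArg Prod.fst hA'f) i,
      fun j => congrFun (congrArg Prod.snd hA'f) j, fun i j => le_trans ?_ hK⟩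
    exact_mod_cast hWK A' hA'W i j
  · have hsub : W.image f ⊆ (Fintype.piFinset fun _ => Finset.range (Fintype.card J * K + 1)) ×ˢ
        (Fintype.piFinset fun _ => Finset.range (Fintype.card I * K + 1)) := by
      intro b hb
      obtain ⟨B, hB, rfl⟩ := Finset.mem_image.1 hb
      simp only [Finset.mem_product, Fintype.mem_piFinset, Finset.mem_range, Nat.lt_succ_iff, f]
      refine ⟨fun i => ?_, fun j => ?_⟩
      · simpa using Finset.sum_le_card_nsmul Finset.univ (B i) K fun j _ => hWK B hB i j
      · simpa using Finset.sum_le_card_nsmul Finset.univ (fun i => B i j) K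
          fun i _ => hWK B hB i j
    simpa using Finset.card_le_card hsub

/-! ### Counting functions with prescribed fibre sizes -/

lemma exists_fiber_card_eq {α β : Type*} [Fintype α] [Fintype β] [DecidableEq β] (k : β → ℕ)
    (hk : ∑ b, k b = Fintype.card α) :
    ∃ φ : α → β, ∀ b, Fintype.card {x // φ x = b} = k b := by
  classical
  let e : α ≃ Σ b, Fin (k b) := Fintype.equivOfCardEq (by simp [hk])
  refine ⟨fun x => (e x).1, fun b => ?_⟩
  have hb : Function.Bijective
      (fun y : Fin (k b) => (⟨⟨b, y⟩, rfl⟩ : {s : Σ b, Fin (k b) // s.1 = b})) := by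
    refine ⟨fun y y' h => by simpa using h, ?_⟩
    rintro ⟨⟨_, y⟩, rfl⟩
    exact ⟨y, rfl⟩
  rw [Fintype.card_congr ((e.subtypeEquiv (q := fun s => s.1 = b) fun x => Iff.rfl).trans
    (Equiv.ofBijective _ hb).symm), Fintype.card_fin]

/-- The functions `α → β` whose fibre over each `b` has `k b` elements. -/
def fiberClass {α β : Type*} [Fintype α] [DecidableEq α] [Fintype β] [DecidableEq β]
    (k : β → ℕ) : Finset (α → β) :=
  {φ | ∀ b, Fintype.card {x // φ x = b} = k b}

lemma factorial_card_le {α β : Type*} [Fintype α] [DecidableEq α] [Fintype β] [DecidableEq β]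
    (k : β → ℕ) (hk : ∑ b, k b = Fintype.card α) :
    (Fintype.card α).factorial ≤ (∏ b, (k b).factorial) * (fiberClass (α := α) k).card := by
  obtain ⟨φ, hφ⟩ := exists_fiber_card_eq (α := α) k hk
  rw [← Fintype.card_perm, ← Finset.card_univ]
  refine Finset.card_le_mul_card_image_of_maps_to (f := fun g : Equiv.Perm α => φ ∘ g)
    (fun g _ => ?_) _ fun ψ _ => ?_
  · simp only [fiberClass, Finset.mem_filter, Finset.mem_univ, true_and]
    intro b
    rw [← hφ b]
    exact Fintype.card_congr (g.subtypeEquiv fun x => Iff.rfl)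
  · rcases Finset.eq_empty_or_nonempty {g : Equiv.Perm α | φ ∘ g = ψ} with h | ⟨g₀, hg₀⟩
    · simp [h]
    · have h1 := DomMulAct.stabilizer_card φ
      simp only [hφ] at h1
      rw [← h1, Fintype.card_subtype]
      refine Finset.card_le_card_of_injOn (fun g => g * g₀⁻¹) (fun g hg => ?_)
        (fun g _ g' _ h => mul_right_cancel h)
      simp only [Finset.coe_filter, Finset.mem_filter, Finset.mem_univ, true_and,
        Set.mem_ofPred_eq] at hg hg₀ ⊢
      funext x
      have h2 := congrFun (hg.trans hg₀.symm) (g₀⁻¹ x)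
      simpa using h2

lemma log_factorial_le (n : ℕ) :
    Real.log n.factorial ≤ n * Real.log n - n + Real.log n + 1 := by
  rcases Nat.eq_zero_or_pos n with rfl | hn
  · simp
  induction n, hn using Nat.le_induction with
  | base => simp
  | succ n hn ih =>
    have hn0 : (0 : ℝ) < n := by exact_mod_cast hn
    rw [Nat.factorial_succ, Nat.cast_mul, Real.log_mul (by positivity) (by positivity)]
    have h1 := Real.one_sub_inv_le_log_of_pos (show (0 : ℝ) < (n + 1) / n by positivity)
    rw [Real.log_div (by positivity) hn0.ne', inv_div] at h1
    have h2 : 1 ≤ ((n : ℝ) + 1) * (Real.log (n + 1) - Real.log n) := by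
      calc (1 : ℝ) = (n + 1) * (1 - n / (n + 1)) := by field_simp; ring
        _ ≤ _ := by gcongr
    push_cast
    linarith

lemma le_log_factorial (n : ℕ) : n * Real.log n - n ≤ Real.log n.factorial := by
  rcases Nat.eq_zero_or_pos n with rfl | hn
  · simp
  have hn0 : (0 : ℝ) < n := by exact_mod_cast hn
  have h := Real.log_le_log (by positivity) (Real.pow_div_factorial_le_exp n hn0.le n)
  rw [Real.log_exp, Real.log_div (by positivity) (by positivity), Real.log_pow] at h
  linarith

lemma le_log_card_fiberClass {α β : Type*} [Fintype α] [DecidableEq α] [Fintype β]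
    [DecidableEq β] [Nonempty α] (k : β → ℕ) (hk : ∑ b, k b = Fintype.card α) :
    (fiberClass (α := α) k).Nonempty ∧
      Fintype.card α * (∑ b, negMulLog ((k b : ℝ) / Fintype.card α)) -
        Fintype.card β * (Real.log (Fintype.card α) + 1) ≤
      Real.log (fiberClass (α := α) k).card := by
  have hfac := factorial_card_le (α := α) k hk
  set M := Fintype.card α with hM
  have hM0 : 0 < M := Fintype.card_pos
  have hMr : (0 : ℝ) < M := by exact_mod_cast hM0
  have hpos : 0 < (fiberClass (α := α) k).card :=
    pos_of_mul_pos_right ((Nat.factorial_pos M).trans_le hfac) (Nat.zero_le _)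
  refine ⟨Finset.card_pos.1 hpos, ?_⟩
  have hlog : Real.log M.factorial ≤
      ∑ b, Real.log (k b).factorial + Real.log (fiberClass (α := α) k).card := by
    rw [← Real.log_prod (fun b _ => by positivity), ← Real.log_mul
      (Finset.prod_ne_zero_iff.2 fun b _ => by positivity) (by positivity)]
    exact Real.log_le_log (by positivity) (by exact_mod_cast hfac)
  have hb : ∀ b, Real.log (k b).factorial ≤
      -(M * negMulLog ((k b : ℝ) / M)) + k b * (Real.log M - 1) + (Real.log M + 1) := by
    intro b
    refine (log_factorial_le (k b)).trans ?_
    have hkM : k b ≤ M := hk ▸ Finset.single_le_sum (f := k) (fun _ _ => Nat.zero_le _)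
      (Finset.mem_univ b)
    rcases Nat.eq_zero_or_pos (k b) with h | h
    · have : 0 ≤ Real.log M := Real.log_nonneg (by exact_mod_cast hM0)
      simp [h]; linarith
    · have hkr : (0 : ℝ) < k b := by exact_mod_cast h
      have h1 : Real.log (k b) ≤ Real.log M := Real.log_le_log hkr (by exact_mod_cast hkM)
      have h2 : M * negMulLog ((k b : ℝ) / M) = -(k b * (Real.log (k b) - Real.log M)) := by
        rw [negMulLog, Real.log_div hkr.ne' hMr.ne']; field_simp
      rw [h2]; linarith
  have hsum := Finset.sum_le_sum fun b (_ : b ∈ Finset.univ) => hb b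
  rw [Finset.sum_add_distrib, Finset.sum_add_distrib, Finset.sum_neg_distrib, ← Finset.mul_sum,
    ← Finset.sum_mul, ← Nat.cast_sum, hk, Finset.sum_const, nsmul_eq_mul, Finset.card_univ] at hsum
  linarith [le_log_factorial M]

lemma sum_val_of_mem_fiberClass {α : Type*} [Fintype α] [DecidableEq α] {K : ℕ}
    {k : Fin (K + 1) → ℕ} {φ : α → Fin (K + 1)} (hφ : φ ∈ fiberClass k) :
    ∑ x, (φ x : ℕ) = ∑ t : Fin (K + 1), (t : ℕ) * k t := by
  simp only [fiberClass, Finset.mem_filter, Finset.mem_univ, true_and] at hφ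
  rw [← Finset.sum_fiberwise_of_maps_to (g := φ) (fun x _ => Finset.mem_univ _)]
  refine Finset.sum_congr rfl fun t _ => ?_
  rw [Finset.sum_congr rfl (g := fun _ => (t : ℕ)) fun x hx => by
    rw [(Finset.mem_filter.1 hx).2], Finset.sum_const, ← hφ t, Fintype.card_subtype]
  simp [mul_comm]

/-! ### The lower bound along perfect squares -/

lemma exists_blockwise_bound {m n a K : ℕ} [NeZero a] {κ : ℕ∞} (hK : (K : ℕ∞) ≤ κ)
    (R : Fin m → ℕ) (C : Fin n → ℕ) (k : Fin m → Fin n → Fin (K + 1) → ℕ)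
    (hk : ∀ i j, ∑ t, k i j t = a * a)
    (hR : ∀ i, ∑ j, ∑ t : Fin (K + 1), (t : ℕ) * k i j t = a * a * R i)
    (hC : ∀ j, ∑ i, ∑ t : Fin (K + 1), (t : ℕ) * k i j t = a * a * C j) :
    ∃ c : ℕ, ∏ i, ∏ j, (fiberClass (α := Fin a × Fin a) (k i j)).card ≤
        c * ((a * n * K + 1) ^ (a * m) * (a * m * K + 1) ^ (a * n)) ∧
      c ^ (a * a) ≤ tableCount (fun _ _ => κ) (cloneVec (a * a) R) (cloneVec (a * a) C) := by
  classical
  have hne : ∀ i j, (fiberClass (α := Fin a × Fin a) (k i j)).Nonempty := fun i j =>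
    (le_log_card_fiberClass (α := Fin a × Fin a) (k i j) (by simp [hk])).1
  let S : Finset (Fin m → Fin n → Fin a × Fin a → Fin (K + 1)) :=
    Fintype.piFinset fun i => Fintype.piFinset fun j => fiberClass (k i j)
  have hS : S.Nonempty := by
    simp only [S, Fintype.piFinset_nonempty]; exact hne
  let F : (Fin m → Fin n → Fin a × Fin a → Fin (K + 1)) →
      (Fin a × Fin m → Fin a × Fin n → ℕ) := fun φ x y => φ x.2 y.2 (x.1, y.1)
  have hF : Function.Injective F := by
    intro φ ψ h
    funext i j ⟨x, y⟩
    exact Fin.ext (congrFun (congrFun h (x, i)) (y, j))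
  obtain ⟨A, hA, hcard⟩ := exists_card_le_mul_tableCount hK (S.image F) (hS.image F) (by
    simp only [Finset.mem_image]
    rintro _ ⟨φ, -, rfl⟩ x y
    exact Nat.lt_succ_iff.1 (φ x.2 y.2 (x.1, y.1)).2)
  obtain ⟨φ, hφ, rfl⟩ := Finset.mem_image.1 hA
  simp only [S, Fintype.mem_piFinset] at hφ
  refine ⟨_, ?_, tableCount_shift_pow_le κ R C (fun x => ∑ y, F φ x y)
    (fun y => ∑ x, F φ x y) (fun i => ?_) (fun j => ?_)⟩
  · rw [Finset.card_image_of_injective _ hF] at hcard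
    simpa [S, Fintype.card_piFinset] using hcard
  · simp only [← hR i, ← sum_val_of_mem_fiberClass (hφ _ _), Fintype.sum_prod_type, F]
    rw [Finset.sum_comm]
    simp only [Finset.sum_comm (s := Finset.univ (α := Fin n))]
    exact Finset.sum_comm
  · simp only [← hC j, ← sum_val_of_mem_fiberClass (hφ _ _), Fintype.sum_prod_type, F]
    simp only [Finset.sum_comm (s := Finset.univ (α := Fin m))]
    exact Finset.sum_comm

lemma blockwise_log_bound {m n a K : ℕ} [NeZero a] {κ : ℕ∞} (hK : (K : ℕ∞) ≤ κ)
    (R : Fin m → ℕ) (C : Fin n → ℕ) (k : Fin m → Fin n → Fin (K + 1) → ℕ)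
    (hk : ∀ i j, ∑ t, k i j t = a * a)
    (hR : ∀ i, ∑ j, ∑ t : Fin (K + 1), (t : ℕ) * k i j t = a * a * R i)
    (hC : ∀ j, ∑ i, ∑ t : Fin (K + 1), (t : ℕ) * k i j t = a * a * C j) :
    (a * a : ℝ) * ((a * a : ℝ) * ∑ i, ∑ j, ∑ t, negMulLog ((k i j t : ℝ) / (a * a)) -
        m * n * (K + 1) * (Real.log (a * a) + 1) -
        (a * m * Real.log (a * (n * K) + 1) + a * n * Real.log (a * (m * K) + 1))) ≤
      Real.log (tableCount (fun _ _ => κ) (cloneVec (a * a) R) (cloneVec (a * a) C)) := by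
  obtain ⟨c, hc, hcT⟩ := exists_blockwise_bound hK R C k hk hR hC
  have hbd := fun i j => le_log_card_fiberClass (α := Fin a × Fin a) (k i j) (by simp [hk])
  have hpos : ∀ i j, 0 < (fiberClass (α := Fin a × Fin a) (k i j)).card :=
    fun i j => Finset.card_pos.2 (hbd i j).1
  have hc0 : 0 < c := by
    refine Nat.pos_of_ne_zero ?_
    rintro rfl
    rw [zero_mul] at hc
    exact absurd hc (Finset.prod_pos fun i _ => Finset.prod_pos fun j _ => hpos i j).not_ge
  have ha : (0 : ℝ) < a * a := by have := Nat.pos_of_ne_zero (NeZero.ne a); positivity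
  have h1 : ∑ i, ∑ j, Real.log (fiberClass (α := Fin a × Fin a) (k i j)).card ≤
      Real.log c +
        (a * m * Real.log (a * (n * K) + 1) + a * n * Real.log (a * (m * K) + 1)) := by
    have h := Real.log_le_log (Nat.cast_pos.2
      (Finset.prod_pos fun i _ => Finset.prod_pos fun j _ => hpos i j))
      (show ((∏ i, ∏ j, (fiberClass (α := Fin a × Fin a) (k i j)).card : ℕ) : ℝ) ≤
        ((c * ((a * n * K + 1) ^ (a * m) * (a * m * K + 1) ^ (a * n)) : ℕ) : ℝ) by
        exact_mod_cast hc)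
    push_cast at h
    rw [Real.log_prod (fun i _ => Finset.prod_ne_zero_iff.2 fun j _ => by
      exact_mod_cast (hpos i j).ne'), Real.log_mul (by positivity) (by positivity),
      Real.log_mul (by positivity) (by positivity), Real.log_pow, Real.log_pow] at h
    simp only [mul_assoc] at h ⊢
    push_cast at h
    convert h using 2
    · rw [Real.log_prod (fun j _ => by exact_mod_cast (hpos _ j).ne')]
    · ring
  have h2 : (a * a : ℝ) * Real.log c ≤
      Real.log (tableCount (fun _ _ => κ) (cloneVec (a * a) R) (cloneVec (a * a) C)) := by
    have h := Real.log_le_log (by positivity)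
      (show ((c ^ (a * a) : ℕ) : ℝ) ≤ _ from Nat.cast_le.2 hcT)
    push_cast [Real.log_pow] at h
    exact h
  have h3 := Finset.sum_le_sum fun i (_ : i ∈ Finset.univ) =>
    Finset.sum_le_sum fun j (_ : j ∈ Finset.univ) => (hbd i j).2
  simp only [Fintype.card_prod, Fintype.card_fin, Nat.cast_mul, Finset.sum_sub_distrib,
    ← Finset.mul_sum, Finset.sum_const, Finset.card_univ, nsmul_eq_mul] at h3
  push_cast at h3
  refine le_trans (mul_le_mul_of_nonneg_left ?_ ha.le) h2
  linarith

lemma exists_rat_dist_approx {m n K : ℕ} (R : Fin m → ℕ) (C : Fin n → ℕ)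
    (w : Fin m → Fin n → Fin (K + 1) → ℝ) (h0 : ∀ i j t, 0 ≤ w i j t)
    (h1 : ∀ i j, ∑ t, w i j t = 1)
    (hR : ∀ i, ∑ j, ∑ t : Fin (K + 1), ((t : ℕ) : ℝ) * w i j t = R i)
    (hC : ∀ j, ∑ i, ∑ t : Fin (K + 1), ((t : ℕ) : ℝ) * w i j t = C j) {ε : ℝ} (hε : 0 < ε) :
    ∃ w' : Fin m → Fin n → Fin (K + 1) → ℚ, (∀ i j t, 0 ≤ w' i j t) ∧
      (∀ i j, ∑ t, w' i j t = 1) ∧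
      (∀ i, ∑ j, ∑ t : Fin (K + 1), ((t : ℕ) : ℚ) * w' i j t = R i) ∧
      (∀ j, ∑ i, ∑ t : Fin (K + 1), ((t : ℕ) : ℚ) * w' i j t = C j) ∧
      ∑ i, ∑ j, ∑ t, negMulLog (w i j t) - ε ≤ ∑ i, ∑ j, ∑ t, negMulLog (w' i j t : ℝ) := by
  let η : ℝ := ε / (m * (n * (K + 1)) + 1)
  have hη : 0 < η := by positivity
  have hδ : ∀ e : Fin m × Fin n × Fin (K + 1), ∃ δ > 0, ∀ x : ℝ, |x - w e.1 e.2.1 e.2.2| < δ →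
      negMulLog (w e.1 e.2.1 e.2.2) - η ≤ negMulLog x ∧ (0 < w e.1 e.2.1 e.2.2 → 0 < x) := by
    intro e
    obtain ⟨δ, hδ, h⟩ := Metric.continuousAt_iff.1
      (continuous_negMulLog.continuousAt (x := w e.1 e.2.1 e.2.2)) η hη
    rcases (h0 e.1 e.2.1 e.2.2).eq_or_lt with hw | hw
    · refine ⟨δ, hδ, fun x hx => ⟨?_, fun h => absurd hw h.ne⟩⟩
      have := (abs_lt.1 (h hx)).1
      linarith
    · refine ⟨min δ (w e.1 e.2.1 e.2.2), lt_min hδ hw, fun x hx => ⟨?_, fun _ => ?_⟩⟩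
      · have := (abs_lt.1 (h (hx.trans_le (min_le_left _ _)))).1
        linarith
      · have := (abs_lt.1 (hx.trans_le (min_le_right _ _))).1
        linarith
  choose δ hδ hδ' using hδ
  obtain ⟨d, hd, hd0⟩ := ((Filter.eventually_all.2 fun e =>
    (Ioo_mem_nhdsGT (hδ e) : ∀ᶠ d in nhdsWithin 0 (Set.Ioi 0), d ∈ Set.Ioo 0 (δ e))).and
      (self_mem_nhdsWithin (a := (0 : ℝ)) (s := Set.Ioi 0))).exists
  obtain ⟨φ, hφ1, hφ⟩ := exists_rat_linearMap_approx
    (fun e : Fin m × Fin n × Fin (K + 1) => w e.1 e.2.1 e.2.2) (show (0 : ℝ) < d from hd0)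
  have hnear := fun i j t => hδ' (i, j, t) _ ((hφ (i, j, t)).trans (hd (i, j, t)).2)
  have hcast : ∀ k : ℕ, φ (k : ℝ) = k := fun k => by
    have := map_nsmul φ k (1 : ℝ)
    simpa [hφ1] using this
  have hmul : ∀ (k : ℕ) (x : ℝ), φ ((k : ℝ) * x) = k * φ x := fun k x => by
    have := map_nsmul φ k x
    simpa using this
  refine ⟨fun i j t => φ (w i j t), fun i j t => ?_, fun i j => ?_, fun i => ?_, fun j => ?_, ?_⟩
  · rcases (h0 i j t).eq_or_lt with h | h
    · simp [← h]
    · exact_mod_cast ((hnear i j t).2 h).le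
  · rw [← map_sum, h1, hφ1]
  · rw [← hcast, ← hR i]; simp only [map_sum, hmul]
  · rw [← hcast, ← hC j]; simp only [map_sum, hmul]
  · have h := Finset.sum_le_sum fun i (_ : i ∈ Finset.univ) =>
      Finset.sum_le_sum fun j (_ : j ∈ Finset.univ) =>
        Finset.sum_le_sum fun t (_ : t ∈ Finset.univ) => (hnear i j t).1
    simp only [Finset.sum_sub_distrib, Finset.sum_const, Finset.card_univ, Fintype.card_fin,
      nsmul_eq_mul] at h
    have h' : (m : ℝ) * (n * (((K + 1 : ℕ) : ℝ) * η)) ≤ ε := by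
      have : (m * (n * (K + 1)) + 1 : ℝ) * η = ε := mul_div_cancel₀ _ (by positivity)
      push_cast; nlinarith
    linarith

lemma exists_common_denominator {ι : Type*} [Fintype ι] (w : ι → ℚ) (hw : ∀ e, 0 ≤ w e) :
    ∃ D : ℕ, 0 < D ∧ ∃ k : ι → ℕ, ∀ e, w e * D = k e := by
  classical
  refine ⟨∏ e, (w e).den, Finset.prod_pos fun e _ => (w e).pos,
    fun e => (w e).num.toNat * ∏ e' ∈ Finset.univ.erase e, (w e').den, fun e => ?_⟩
  rw [← Finset.mul_prod_erase _ _ (Finset.mem_univ e)]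
  push_cast
  rw [← mul_assoc, Rat.mul_den_eq_num]
  congr 1
  have := Int.toNat_of_nonneg (Rat.num_nonneg.2 (hw e))
  exact_mod_cast this.symm

lemma tendsto_log_mul_add_one_div {b : ℝ} (hb : 0 ≤ b) :
    Tendsto (fun a : ℕ => Real.log (a * b + 1) / a) atTop (nhds 0) := by
  rcases hb.eq_or_lt with rfl | hb
  · simp
  have h1 : Tendsto (fun a : ℕ => (a : ℝ) * b + 1) atTop atTop :=
    tendsto_atTop_add_const_right _ _ (tendsto_natCast_atTop_atTop.atTop_mul_const hb)
  refine ((Real.tendsto_pow_log_div_mul_add_atTop b⁻¹ (-b⁻¹) 1 (by positivity)).comp h1).congr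
    fun a => ?_
  simp only [Function.comp_apply, pow_one]
  congr 1
  field_simp
  ring

lemma tendsto_blockwise_error (m n K : ℕ) :
    Tendsto (fun a : ℕ => (m * n * (K + 1) * (Real.log (a * a) + 1) +
      (a * m * Real.log (a * (n * K) + 1) + a * n * Real.log (a * (m * K) + 1))) / (a * a : ℝ))
      atTop (nhds 0) := by
  have hsq : Tendsto (fun a : ℕ => (a : ℝ) * a) atTop atTop :=
    tendsto_natCast_atTop_atTop.atTop_mul_atTop₀ tendsto_natCast_atTop_atTop
  have h1 : Tendsto (fun a : ℕ => Real.log (a * a : ℝ) / (a * a : ℝ)) atTop (nhds 0) := by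
    simpa [Function.comp_def] using
      (Real.tendsto_pow_log_div_mul_add_atTop 1 0 1 one_ne_zero).comp hsq
  have h2 := tendsto_inv_atTop_zero.comp hsq
  have h3 := tendsto_log_mul_add_one_div (b := n * K) (by positivity)
  have h4 := tendsto_log_mul_add_one_div (b := m * K) (by positivity)
  have := ((h1.add h2).const_mul (m * n * (K + 1) : ℝ)).add
    ((h3.const_mul (m : ℝ)).add (h4.const_mul (n : ℝ)))
  simp only [add_zero, mul_zero] at this
  refine this.congr' ?_
  filter_upwards [eventually_gt_atTop 0] with a ha
  have ha' : (a : ℝ) ≠ 0 := by positivity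
  simp only [Function.comp_apply]
  field_simp

lemma exists_clone_ge {m n : ℕ} {κ : ℕ∞} (hκ : 1 ≤ κ) (R : Fin m → ℕ) (C : Fin n → ℕ)
    {Z : Fin m → Fin n → ℝ} (hZ : Z ∈ transportPolytope κ R C) {ε : ℝ} (hε : 0 < ε) :
    ∃ s : ℕ, 0 < s ∧ (s : ℝ) ^ 2 * (∑ i, ∑ j, Hmax κ (Z i j) - ε) ≤
      Real.log (tableCount (fun _ _ => κ) (cloneVec s R) (cloneVec s C)) := by
  obtain ⟨hZ0, hZκ, hZR, hZC⟩ := hZ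
  let η : ℝ := ε / 3 / (m * n + 1)
  have hη : 0 < η := by positivity
  obtain ⟨K, w, hK, hw⟩ := exists_isDistOfMean hκ (fun e : Fin m × Fin n => Z e.1 e.2)
    (fun e => hZ0 _ _) (fun e => hZκ _ _) hη
  have hmean : ∀ i j, ∑ t : Fin (K + 1), ((t : ℕ) : ℝ) * w (i, j) t = Z i j := fun i j => by
    rw [Fin.sum_univ_eq_sum_range fun t => (t : ℝ) * w (i, j) t]
    exact (hw (i, j)).1.mean_eq
  obtain ⟨w', hw0, hw1, hwR, hwC, hwH⟩ := exists_rat_dist_approx R C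
    (fun i j (t : Fin (K + 1)) => w (i, j) t) (fun i j t => (hw (i, j)).1.nonneg t)
    (fun i j => by
      rw [Fin.sum_univ_eq_sum_range fun t => w (i, j) t]; exact (hw (i, j)).1.sum_eq)
    (fun i => by simp only [hmean, hZR]) (fun j => by simp only [hmean, hZC])
    (show 0 < ε / 3 by positivity)
  obtain ⟨D, hD, k, hk⟩ := exists_common_denominator
    (fun e : Fin m × Fin n × Fin (K + 1) => w' e.1 e.2.1 e.2.2) fun e => hw0 _ _ _
  obtain ⟨a₀, ha₀⟩ := Filter.eventually_atTop.1
    ((tendsto_blockwise_error m n K).eventually_lt_const (show 0 < ε / 3 by positivity))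
  let a := D * (a₀ + 1)
  have ha : 0 < a := by positivity
  have : NeZero a := ⟨ha.ne'⟩
  have haa : (0 : ℝ) < a * a := by positivity
  obtain ⟨k', hk'⟩ : ∃ k' : Fin m → Fin n → Fin (K + 1) → ℕ,
      ∀ i j t, (k' i j t : ℚ) = w' i j t * (a * a) := by
    refine ⟨fun i j t => k (i, j, t) * (D * (a₀ + 1) * (a₀ + 1)), fun i j t => ?_⟩
    simp only [a]
    push_cast
    rw [← hk (i, j, t)]
    ring
  have hb := blockwise_log_bound (a := a) hK R C k'
    (fun i j => by
      rw [← Nat.cast_inj (R := ℚ)]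
      push_cast
      simp only [hk', ← Finset.sum_mul, hw1, one_mul])
    (fun i => by
      rw [← Nat.cast_inj (R := ℚ)]
      push_cast
      simp only [hk', ← mul_assoc, ← Finset.sum_mul, hwR]
      ring)
    (fun j => by
      rw [← Nat.cast_inj (R := ℚ)]
      push_cast
      simp only [hk', ← mul_assoc, ← Finset.sum_mul, hwC]
      ring)
  have hkr : ∀ i j t, (k' i j t : ℝ) / (a * a) = (w' i j t : ℝ) := fun i j t => by
    rw [div_eq_iff haa.ne']
    exact_mod_cast congrArg (Rat.cast : ℚ → ℝ) (hk' i j t)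
  simp only [hkr] at hb
  have herr := ha₀ a (by simp only [a]; nlinarith)
  rw [div_lt_iff₀ haa] at herr
  have hH := Finset.sum_le_sum fun i (_ : i ∈ Finset.univ) =>
    Finset.sum_le_sum fun j (_ : j ∈ Finset.univ) => (hw (i, j)).2
  simp only [Finset.sum_sub_distrib, Finset.sum_const, Finset.card_univ, Fintype.card_fin,
    nsmul_eq_mul, ← Fin.sum_univ_eq_sum_range fun t => negMulLog (w _ t)] at hH
  have h3 : (m : ℝ) * (n * η) ≤ ε / 3 := by
    have : (m * n + 1 : ℝ) * η = ε / 3 := mul_div_cancel₀ _ (by positivity)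
    nlinarith
  refine ⟨a * a, by positivity, le_trans ?_ hb⟩
  push_cast
  rw [sq, mul_assoc (a * a : ℝ)]
  refine mul_le_mul_of_nonneg_left ?_ haa.le
  nlinarith

lemma tableCount_clone_pos {m n : ℕ} {κ : ℕ∞} (R : Fin m → ℕ) (C : Fin n → ℕ)
    (hT : 0 < tableCount (fun (_ : Fin m) (_ : Fin n) => κ) R C) (s : ℕ) :
    0 < tableCount (fun _ _ => κ) (cloneVec s R) (cloneVec s C) := by
  refine lt_of_lt_of_le ?_ ((tableCount_clone_le_add κ R C hT 0 s).trans_eq (by rw [zero_add]))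
  exact (Set.ncard_pos (finite_tables _ _ _)).2
    ⟨0, fun i => i.1.elim0, fun j => j.1.elim0, fun i => i.1.elim0⟩

lemma eventually_clone_ge {m n : ℕ} {κ : ℕ∞} (R : Fin m → ℕ) (C : Fin n → ℕ)
    (hT : 0 < tableCount (fun (_ : Fin m) (_ : Fin n) => κ) R C) {t : ℕ} (ht : 0 < t) {v u : ℝ}
    (hv : (t : ℝ) ^ 2 * v ≤
      Real.log (tableCount (fun _ _ => κ) (cloneVec t R) (cloneVec t C))) (hu : u < v) :
    ∀ᶠ s : ℕ in atTop, u < (1 / (s : ℝ) ^ 2) *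
      Real.log (tableCount (fun _ _ => κ) (cloneVec s R) (cloneVec s C)) := by
  have htr : (0 : ℝ) < t := by positivity
  have hdiv : Tendsto (fun s : ℕ => ((s / t : ℕ) : ℝ) / s) atTop (nhds (t : ℝ)⁻¹) := by
    have h := (tendsto_nat_floor_mul_div_atTop (R := ℝ) (a := (t : ℝ)⁻¹) (by positivity)).comp
      tendsto_natCast_atTop_atTop
    refine h.congr fun s => ?_
    simp only [Function.comp_apply]
    rw [inv_mul_eq_div, Nat.floor_div_natCast, Nat.floor_natCast]
  have hlim : Tendsto (fun s : ℕ => (((s / t : ℕ) : ℝ) / s) ^ 2 *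
      Real.log (tableCount (fun _ _ => κ) (cloneVec t R) (cloneVec t C))) atTop
      (nhds ((t : ℝ)⁻¹ ^ 2 *
        Real.log (tableCount (fun _ _ => κ) (cloneVec t R) (cloneVec t C)))) :=
    (hdiv.pow 2).mul_const _
  have hlt : u < (t : ℝ)⁻¹ ^ 2 *
      Real.log (tableCount (fun _ _ => κ) (cloneVec t R) (cloneVec t C)) := by
    refine hu.trans_le ?_
    rw [inv_pow, inv_mul_eq_div, le_div_iff₀ (by positivity)]
    linarith
  filter_upwards [hlim.eventually_const_lt hlt] with s hs
  refine hs.trans_le ?_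
  rw [div_pow, div_eq_mul_one_div, mul_comm (_ ^ 2), mul_assoc]
  refine mul_le_mul_of_nonneg_left ?_ (by positivity)
  have h := (tableCount_clone_pow_le κ R C (s / t) t).trans
    (tableCount_clone_le_add κ R C hT (s / t * t) (s % t))
  rw [Nat.div_add_mod' s t] at h
  have h' := Real.log_le_log (by exact_mod_cast pow_pos (tableCount_clone_pos R C hT t) _)
    (Nat.cast_le (α := ℝ).2 h)
  push_cast [Real.log_pow] at h'
  rw [sq]
  exact_mod_cast h'

/-! ### The upper bound -/

lemma card_le_exp_Hmax {α : Type*} [Fintype α] [Nonempty α] (κ : ℕ∞) (S : ℕ)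
    (W : Finset (α → ℕ)) (hW : ∀ φ ∈ W, ∑ x, φ x = S) (hWκ : ∀ φ ∈ W, ∀ x, (φ x : ℕ∞) ≤ κ) :
    (W.card : ℝ) ≤ Real.exp (Fintype.card α * Hmax κ ((S : ℝ) / Fintype.card α)) := by
  classical
  have hM0 : 0 < Fintype.card α := Fintype.card_pos
  have hM : (0 : ℝ) < Fintype.card α := by exact_mod_cast hM0
  have hx : (0 : ℝ) ≤ (S : ℝ) / Fintype.card α := by positivity
  have hsub : (∀ φ ∈ W, ∀ ψ ∈ W, φ = ψ) → (W.card : ℝ) ≤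
      Real.exp (Fintype.card α * Hmax κ ((S : ℝ) / Fintype.card α)) := fun h =>
    le_trans (by exact_mod_cast Finset.card_le_one.2 h)
      (Real.one_le_exp (mul_nonneg hM.le (Hmax_nonneg κ hx)))
  rcases Nat.eq_zero_or_pos S with rfl | hS
  · refine hsub fun φ hφ ψ hψ => ?_
    have h1 := hW φ hφ
    have h2 := hW ψ hψ
    simp only [Finset.sum_eq_zero_iff, Finset.mem_univ, true_imp_iff] at h1 h2
    funext x
    rw [h1, h2]
  by_cases hκS : κ ≠ ⊤ ∧ Fintype.card α * κ.toNat ≤ S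
  · obtain ⟨hκ, hκS⟩ := hκS
    have hmax : ∀ φ ∈ W, ∀ x, φ x = κ.toNat := by
      intro φ hφ x
      have hle : ∀ x ∈ Finset.univ, φ x ≤ κ.toNat := fun x _ => by
        simpa using ENat.toNat_le_toNat (hWκ φ hφ x) hκ
      refine (Finset.sum_eq_sum_iff_of_le hle).1 (le_antisymm (Finset.sum_le_sum hle) ?_) x
        (Finset.mem_univ x)
      simpa [hW φ hφ] using hκS
    refine hsub fun φ hφ ψ hψ => ?_
    funext x
    rw [hmax φ hφ, hmax ψ hψ]
  · push Not at hκS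
    obtain ⟨hq, hH⟩ := Hmax_eq_of_pos κ (x := (S : ℝ) / Fintype.card α) (by positivity)
      fun hκ => by
        rw [div_lt_iff₀ hM, mul_comm]
        exact_mod_cast hκS hκ
    have hp := tgP_pos κ hx
    set x := (S : ℝ) / Fintype.card α with hxdef
    have hprod : ∀ φ ∈ W, ∏ a, tgPMF κ x (φ a) = tgP κ x ^ Fintype.card α * tgQ κ x ^ S := by
      intro φ hφ
      rw [← hW φ hφ, ← Finset.prod_pow_eq_pow_sum]
      simp [tgPMF, hWκ φ hφ, Finset.prod_mul_distrib]
    have hle : (W.card : ℝ) * (tgP κ x ^ Fintype.card α * tgQ κ x ^ S) ≤ 1 := by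
      rw [← nsmul_eq_mul, ← Finset.sum_const, ← Finset.sum_congr rfl hprod]
      calc ∑ φ ∈ W, ∏ a, tgPMF κ x (φ a)
          ≤ ∑ φ ∈ Fintype.piFinset fun _ : α => Finset.range (S + 1), ∏ a, tgPMF κ x (φ a) := by
            refine Finset.sum_le_sum_of_subset_of_nonneg (fun φ hφ => ?_) fun φ _ _ =>
              Finset.prod_nonneg fun a _ => tgPMF_nonneg κ hx _
            simp only [Fintype.mem_piFinset, Finset.mem_range, Nat.lt_succ_iff]
            intro a
            rw [← hW φ hφ]
            exact Finset.single_le_sum (f := φ) (fun _ _ => Nat.zero_le _) (Finset.mem_univ a)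
        _ = ∏ _a : α, ∑ t ∈ Finset.range (S + 1), tgPMF κ x t := Finset.sum_prod_piFinset _ _
        _ ≤ 1 := Finset.prod_le_one
            (fun _ _ => Finset.sum_nonneg fun t _ => tgPMF_nonneg κ hx t)
            fun _ _ => sum_le_hasSum _ (fun t _ => tgPMF_nonneg κ hx t) (tgPMF_hasSum κ hx)
    have hexp : Real.exp (Fintype.card α * Hmax κ x) =
        (tgP κ x ^ Fintype.card α * tgQ κ x ^ S)⁻¹ := by
      rw [hH, ← Real.exp_log (show 0 < (tgP κ x ^ Fintype.card α * tgQ κ x ^ S)⁻¹ by positivity),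
        Real.log_inv, Real.log_mul (by positivity) (by positivity), Real.log_pow, Real.log_pow]
      congr 1
      rw [show (S : ℝ) = Fintype.card α * x by rw [hxdef]; field_simp]
      ring
    rw [hexp, ← one_div, le_div_iff₀ (by positivity)]
    exact hle

lemma transportPolytope_le {κ : ℕ∞} {m n : ℕ} {R : Fin m → ℕ} {C : Fin n → ℕ}
    {Z : Fin m → Fin n → ℝ} (hZ : Z ∈ transportPolytope κ R C) (i : Fin m) (j : Fin n) :
    Z i j ≤ ((∑ i, R i : ℕ) : ℝ) := by
  have h1 : Z i j ≤ R i := by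
    rw [← hZ.2.2.1 i]
    exact Finset.single_le_sum (fun j _ => hZ.1 i j) (Finset.mem_univ j)
  exact h1.trans (by
    exact_mod_cast Finset.single_le_sum (fun _ _ => Nat.zero_le _) (Finset.mem_univ i))

lemma bddAbove_entropy (κ : ℕ∞) {m n : ℕ} (R : Fin m → ℕ) (C : Fin n → ℕ) :
    BddAbove {v : ℝ | ∃ Z ∈ transportPolytope κ R C, v = ∑ i, ∑ j, Hmax κ (Z i j)} := by
  obtain ⟨B, hB⟩ := exists_Hmax_le κ ((∑ i, R i : ℕ) : ℝ)
  refine ⟨∑ _i : Fin m, ∑ _j : Fin n, B, ?_⟩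
  rintro _ ⟨Z, hZ, rfl⟩
  exact Finset.sum_le_sum fun i _ => Finset.sum_le_sum fun j _ =>
    hB _ (hZ.1 i j) (transportPolytope_le hZ i j)

lemma natCast_mem_transportPolytope {κ : ℕ∞} {m n s : ℕ} (hs : 0 < s) {R : Fin m → ℕ}
    {C : Fin n → ℕ} {A : Fin s × Fin m → Fin s × Fin n → ℕ}
    (hR : ∀ x, ∑ y, A x y = cloneVec s R x) (hC : ∀ y, ∑ x, A x y = cloneVec s C y)
    (hA : ∀ x y, (A x y : ℕ∞) ≤ κ) :
    (fun i j => ((∑ p : Fin s × Fin s, A (p.1, i) (p.2, j) : ℕ) : ℝ) / (s * s : ℝ)) ∈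
      transportPolytope κ R C := by
  have hs' : (0 : ℝ) < s * s := by positivity
  refine ⟨fun i j => by positivity, fun i j hκ => ?_, fun i => ?_, fun j => ?_⟩
  · rw [div_le_iff₀ hs']
    have h := Finset.sum_le_card_nsmul (Finset.univ : Finset (Fin s × Fin s))
      (fun p => A (p.1, i) (p.2, j)) κ.toNat fun p _ => by
        simpa using ENat.toNat_le_toNat (hA (p.1, i) (p.2, j)) hκ
    simp only [Finset.card_univ, Fintype.card_prod, Fintype.card_fin, smul_eq_mul] at h
    rw [mul_comm]
    exact_mod_cast h
  · rw [← Finset.sum_div, div_eq_iff hs'.ne', ← Nat.cast_sum]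
    have h : ∑ j, ∑ p : Fin s × Fin s, A (p.1, i) (p.2, j) = R i * (s * s) := by
      calc _ = ∑ x, ∑ y, A (x, i) y := by
            simp only [Fintype.sum_prod_type]
            rw [Finset.sum_comm]
            exact Finset.sum_congr rfl fun x _ => Finset.sum_comm
        _ = _ := by simp only [hR, cloneVec]; simp; ring
    exact_mod_cast h
  · rw [← Finset.sum_div, div_eq_iff hs'.ne', ← Nat.cast_sum]
    have h : ∑ i, ∑ p : Fin s × Fin s, A (p.1, i) (p.2, j) = C j * (s * s) := by
      calc _ = ∑ y, ∑ x, A x (y, j) := by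
            simp only [Fintype.sum_prod_type_right]
            rw [Finset.sum_comm]
        _ = _ := by simp only [hC, cloneVec]; simp; ring
    exact_mod_cast h

lemma tableCount_clone_le_exp {κ : ℕ∞} {m n s : ℕ} (hs : 0 < s) (R : Fin m → ℕ) (C : Fin n → ℕ)
    {B : ℝ} (hB : ∀ Z ∈ transportPolytope κ R C, ∑ i, ∑ j, Hmax κ (Z i j) ≤ B) :
    (tableCount (fun _ _ => κ) (cloneVec s R) (cloneVec s C) : ℝ) ≤
      (s * s * (∑ i, R i : ℕ) + 1) ^ (m * n) * Real.exp (s * s * B) := by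
  classical
  have : NeZero s := ⟨hs.ne'⟩
  have hs' : (0 : ℝ) < s * s := by positivity
  have hfin := finite_tables (fun _ _ => κ) (cloneVec s R) (cloneVec s C)
  rw [tableCount, Set.ncard_eq_toFinset_card _ hfin]
  set W := hfin.toFinset with hW
  have hmem : ∀ A ∈ W, (∀ x, ∑ y, A x y = cloneVec s R x) ∧ (∀ y, ∑ x, A x y = cloneVec s C y) ∧
      ∀ x y, (A x y : ℕ∞) ≤ κ := fun A hA => (Set.Finite.mem_toFinset hfin).1 hA
  let g : (Fin s × Fin m → Fin s × Fin n → ℕ) → Fin m → Fin n → ℕ :=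
    fun A i j => ∑ p : Fin s × Fin s, A (p.1, i) (p.2, j)
  let G : Finset (Fin m → Fin n → ℕ) := Fintype.piFinset fun _ => Fintype.piFinset fun _ =>
    Finset.range (s * s * (∑ i, R i) + 1)
  have hmaps : Set.MapsTo g W G := by
    intro A hA
    obtain ⟨h1, h2, h3⟩ := hmem A hA
    simp only [G, Finset.mem_coe, Fintype.mem_piFinset, Finset.mem_range, Nat.lt_succ_iff]
    intro i j
    have h := transportPolytope_le (natCast_mem_transportPolytope hs h1 h2 h3) i j
    rw [div_le_iff₀ hs', mul_comm] at h
    exact_mod_cast h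
  have hfiber : ∀ b ∈ G, ((W.filter fun A => g A = b).card : ℝ) ≤ Real.exp (s * s * B) := by
    intro b _
    rcases (W.filter fun A => g A = b).eq_empty_or_nonempty with h | ⟨A₀, hA₀⟩
    · rw [h]; simpa using (Real.exp_pos _).le
    rw [Finset.mem_filter] at hA₀
    obtain ⟨hA₀, rfl⟩ := hA₀
    obtain ⟨h1, h2, h3⟩ := hmem A₀ hA₀
    let V : Fin m → Fin n → Finset (Fin s × Fin s → ℕ) := fun i j =>
      (W.filter fun A => g A = g A₀).image fun A p => A (p.1, i) (p.2, j)
    have hV : ∀ i j, ((V i j).card : ℝ) ≤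
        Real.exp (s * s * Hmax κ ((g A₀ i j : ℝ) / (s * s))) := by
      intro i j
      have h := card_le_exp_Hmax κ (g A₀ i j) (V i j)
        (by
          simp only [V, Finset.mem_image, Finset.mem_filter]
          rintro _ ⟨A, ⟨-, hA⟩, rfl⟩
          exact congrFun (congrFun hA i) j)
        (by
          simp only [V, Finset.mem_image, Finset.mem_filter]
          rintro _ ⟨A, ⟨hA, -⟩, rfl⟩ p
          exact (hmem A hA).2.2 _ _)
      simpa using h
    have hinj : (W.filter fun A => g A = g A₀).card ≤ ∏ i, ∏ j, (V i j).card := by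
      simp only [← Fintype.card_piFinset]
      refine Finset.card_le_card_of_injOn (fun A i j p => A (p.1, i) (p.2, j)) (fun A hA => ?_)
        fun A _ A' _ h => ?_
      · simp only [Finset.mem_coe, Fintype.mem_piFinset]
        exact fun i j => Finset.mem_image_of_mem _ hA
      · funext ⟨x, i⟩ ⟨y, j⟩
        exact congrFun (congrFun (congrFun h i) j) (x, y)
    calc ((W.filter fun A => g A = g A₀).card : ℝ)
        ≤ ∏ i, ∏ j, ((V i j).card : ℝ) := by exact_mod_cast hinj
      _ ≤ ∏ i, ∏ j, Real.exp (s * s * Hmax κ ((g A₀ i j : ℝ) / (s * s))) :=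
          Finset.prod_le_prod (fun i _ => Finset.prod_nonneg fun j _ => Nat.cast_nonneg _)
            fun i _ => Finset.prod_le_prod (fun j _ => Nat.cast_nonneg _) fun j _ => hV i j
      _ = Real.exp (s * s * ∑ i, ∑ j, Hmax κ ((g A₀ i j : ℝ) / (s * s))) := by
          simp only [← Real.exp_sum, Finset.mul_sum]
      _ ≤ Real.exp (s * s * B) := Real.exp_le_exp.2 (mul_le_mul_of_nonneg_left
          (hB _ (natCast_mem_transportPolytope hs h1 h2 h3)) hs'.le)
  rw [Finset.card_eq_sum_card_fiberwise hmaps, Nat.cast_sum]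
  refine (Finset.sum_le_card_nsmul _ _ _ hfiber).trans (le_of_eq ?_)
  rw [nsmul_eq_mul]
  congr 1
  simp [G, Fintype.card_piFinset, pow_mul, mul_comm m n]

lemma eventually_clone_le {κ : ℕ∞} {m n : ℕ} (R : Fin m → ℕ) (C : Fin n → ℕ)
    (hT : 0 < tableCount (fun (_ : Fin m) (_ : Fin n) => κ) R C) {B u : ℝ}
    (hB : ∀ Z ∈ transportPolytope κ R C, ∑ i, ∑ j, Hmax κ (Z i j) ≤ B) (hu : B < u) :
    ∀ᶠ s : ℕ in atTop, (1 / (s : ℝ) ^ 2) *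
      Real.log (tableCount (fun _ _ => κ) (cloneVec s R) (cloneVec s C)) < u := by
  have hsq : Tendsto (fun s : ℕ => s * s) atTop atTop := tendsto_id.atTop_mul_atTop₀ tendsto_id
  have hlim := (((tendsto_log_mul_add_one_div (b := ((∑ i, R i : ℕ) : ℝ))
    (Nat.cast_nonneg _)).comp hsq).const_mul (m * n : ℝ)).add_const B
  rw [mul_zero, zero_add] at hlim
  filter_upwards [hlim.eventually_lt_const hu, eventually_gt_atTop 0] with s hs hs0
  refine lt_of_le_of_lt ?_ hs
  have h := Real.log_le_log (by exact_mod_cast tableCount_clone_pos R C hT s)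
    (tableCount_clone_le_exp hs0 R C hB)
  rw [Real.log_mul (by positivity) (by positivity), Real.log_exp, Real.log_pow] at h
  have hs' : (0 : ℝ) < s ^ 2 := by positivity
  simp only [Function.comp_apply]
  rw [one_div, inv_mul_le_iff₀ hs']
  refine h.trans (le_of_eq ?_)
  push_cast
  field_simp

lemma transportPolytope_nonempty {κ : ℕ∞} {m n : ℕ} (R : Fin m → ℕ) (C : Fin n → ℕ)
    (hT : 0 < tableCount (fun (_ : Fin m) (_ : Fin n) => κ) R C) :
    (transportPolytope κ R C).Nonempty := by
  obtain ⟨A, hR, hC, hA⟩ := Set.nonempty_of_ncard_ne_zero hT.ne'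
  refine ⟨fun i j => A i j, fun i j => Nat.cast_nonneg _, fun i j hκ => ?_,
    fun i => ?_, fun j => ?_⟩
  · exact Nat.cast_le.2 (by simpa using ENat.toNat_le_toNat (hA i j) hκ)
  · rw [← Nat.cast_sum, hR]
  · rw [← Nat.cast_sum, hC]

/-- **Theorem 3(i).** The log-asymptotics of `T_κ(R^{(s)},C^{(s)})` equals the maximum of
`∑_{ij} H^max_κ(z_{ij})` over the polytope `Π_κ(R,C)`. -/
theorem tables_cloning_entropy_limit {m n : ℕ} (κ : ℕ∞) (hκ : 1 ≤ κ)
    (R : Fin m → ℕ) (C : Fin n → ℕ) (N : ℕ)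
    (hRN : ∑ i, R i = N) (hCN : ∑ j, C j = N)
    (hT : 0 < tableCount (fun (_ : Fin m) (_ : Fin n) => κ) R C) :
    Filter.Tendsto (fun s : ℕ => (1 / (s : ℝ) ^ 2) *
      Real.log (tableCount (fun (_ : Fin s × Fin m) (_ : Fin s × Fin n) => κ)
        (cloneVec s R) (cloneVec s C)))
      Filter.atTop
      (nhds (sSup {v : ℝ | ∃ Z ∈ transportPolytope κ R C,
        v = ∑ i, ∑ j, Hmax κ (Z i j)})) := by
  refine tendsto_order.2 ⟨fun u hu => ?_, fun u hu => ?_⟩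
  · obtain ⟨Z₀, hZ₀⟩ := transportPolytope_nonempty R C hT
    obtain ⟨_, ⟨Z, hZ, rfl⟩, hv⟩ := exists_lt_of_lt_csSup
      (by exact ⟨_, Z₀, hZ₀, rfl⟩) hu
    obtain ⟨t, ht, hge⟩ := exists_clone_ge hκ R C hZ (half_pos (sub_pos.2 hv))
    exact eventually_clone_ge R C hT ht hge (by linarith)
  · exact eventually_clone_le R C hT
      (fun Z hZ => le_csSup (bddAbove_entropy κ R C) ⟨Z, hZ, rfl⟩) hu
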